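/- For all information structures u, v on K × ℕ × ℕ: u ⪰ v (i.e. val(u,g) ≥ val(v,g) for every payoff function g ∈ 𝒢) if and only if there exist garblings q₁, q₂ ∈ 𝒬 with q₁.u = v.q₂. -/

import Mathlib

open scoped BigOperators ENNReal

namespace ValueDistance

/-- An information structure: a probability distribution on `K × ℕ × ℕ`
(state, signal of player 1, signal of player 2). -/
abbrev InfoStruct (K : Type) := PMF (K × ℕ × ℕ)

/-- A behavior strategy / garbling : a map `ℕ → Δ(ℕ)`. -/
abbrev Garbling : Type := ℕ → PMF ℕ

variable {K : Type}

/-- `g` is a payoff function with action bound `L` : values in `[-1,1]`,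
`g k i j = -1` when `i ≥ L`, and `g k i j = 1` when `i < L` and `j ≥ L`. -/
def IsPayoffL (L : ℕ) (g : K → ℕ → ℕ → ℝ) : Prop :=
  (∀ k i j, g k i j ∈ Set.Icc (-1 : ℝ) 1) ∧
  (∀ k i j, L ≤ i → g k i j = -1) ∧
  (∀ k i j, i < L → L ≤ j → g k i j = 1)

/-- `g` belongs to the set `𝒢` of payoff functions. -/
def IsPayoff (g : K → ℕ → ℕ → ℝ) : Prop := ∃ L, IsPayoffL L g

/-- `g` belongs to the set `𝒢₁` of single-agent (player 1) problems. -/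
def IsPayoff1 (g : K → ℕ → ℕ → ℝ) : Prop :=
  IsPayoff g ∧ ∀ k i j j', g k i j = g k i j'

/-- Expected payoff in the Bayesian game `Γ(u,g)` when player 1 uses the behavior
strategy `σ` and player 2 uses `τ`. -/
noncomputable def payoff (u : InfoStruct K) (g : K → ℕ → ℕ → ℝ)
    (σ τ : Garbling) : ℝ :=
  ∑' (x : K × ℕ × ℕ) (i : ℕ) (j : ℕ),
    (u x).toReal * (σ x.2.1 i).toReal * (τ x.2.2 j).toReal * g x.1 i j

/-- The value `val(u,g)` of the zero-sum Bayesian game `Γ(u,g)`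
(the common value of `sup inf` and `inf sup` of the expected payoff;
we take `sup inf` as the definition). -/
noncomputable def val (u : InfoStruct K) (g : K → ℕ → ℕ → ℝ) : ℝ :=
  ⨆ σ : Garbling, ⨅ τ : Garbling, payoff u g σ τ

/-- Total variation distance `‖u − v‖`. -/
noncomputable def tv {α : Type} (u v : PMF α) : ℝ :=
  ∑' x : α, |(u x).toReal - (v x).toReal|

/-- `q.u` : player 1's signal garbled through `q`. -/
noncomputable def garbleLeft (q : Garbling) (u : InfoStruct K) : InfoStruct K :=
  u.bind (fun x => (q x.2.1).map (fun c => (x.1, c, x.2.2)))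

/-- `u.q` : player 2's signal garbled through `q`. -/
noncomputable def garbleRight (u : InfoStruct K) (q : Garbling) : InfoStruct K :=
  u.bind (fun x => (q x.2.2).map (fun d => (x.1, x.2.1, d)))

/-- The value-based distance `d(u,v) = sup_{g ∈ 𝒢} |val(u,g) − val(v,g)|`. -/
noncomputable def dVal (u v : InfoStruct K) : ℝ :=
  ⨆ g : {g : K → ℕ → ℕ → ℝ // IsPayoff g}, |val u g.1 - val v g.1|

/-- The single-agent distance `d₁(u,v) = sup_{g ∈ 𝒢₁} |val(u,g) − val(v,g)|`. -/
noncomputable def d1 (u v : InfoStruct K) : ℝ :=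
  ⨆ g : {g : K → ℕ → ℕ → ℝ // IsPayoff1 g}, |val u g.1 - val v g.1|

/-- Marginal of an information structure on `K × ℕ` (state, player 1's signal). -/
noncomputable def marg1 (u : InfoStruct K) : PMF (K × ℕ) :=
  u.map (fun x => (x.1, x.2.1))

/-- Garbling of a single-agent information structure:
`(q.w)(k,c) = Σ_s w(k,s)·q(s)({c})`. -/
noncomputable def garble1 (q : Garbling) (w : PMF (K × ℕ)) : PMF (K × ℕ) :=
  w.bind (fun x => (q x.2).map (fun c => (x.1, c)))

/-- Marginal of an information structure on the states. -/
noncomputable def margK (u : InfoStruct K) : PMF K := u.map Prod.fst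

/-- Marginal of an information structure on `K × ℕ` (state, player 2's signal). -/
noncomputable def margKD (u : InfoStruct K) : PMF (K × ℕ) :=
  u.map (fun x => (x.1, x.2.2))

/-- `σ.q` : on signal `c`, draw `c'` according to `q(c)` and play `σ(c')`. -/
noncomputable def compGarble (σ q : Garbling) : Garbling :=
  fun c => (q c).bind σ

/-- `u ∈ 𝒰(L)` : both players' signals are `< L` with probability 1. -/
def InU (L : ℕ) (u : InfoStruct K) : Prop :=
  ∀ x : K × ℕ × ℕ, u x ≠ 0 → x.2.1 < L ∧ x.2.2 < L

/-- `q ∈ 𝒬(L)` : garbling with values supported on `{0,…,L−1}`. -/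
def GarblingIn (L : ℕ) (q : Garbling) : Prop :=
  ∀ n m, q n m ≠ 0 → m < L

/-- The two players' signals are conditionally independent given the state:
`u(k)·u(k,c,d) = u(k,c)·u(k,d)` for all `k, c, d`
(equivalently `u(c,d|k) = u(c|k)·u(d|k)` whenever `u(k) > 0`). -/
def CondIndep (u : InfoStruct K) : Prop :=
  ∀ (k : K) (c d : ℕ),
    (∑' y : ℕ × ℕ, u (k, y)) * u (k, c, d)
      = (∑' d' : ℕ, u (k, c, d')) * (∑' c' : ℕ, u (k, c', d))

end ValueDistance

namespace ValueDistance

/-!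
A strategy is itself a garbling into actions, so the payoff of `(σ, τ)` is the integral of `g`
against `σ.u.τ`. If `q₁.u = v.q₂`, then playing `σ` after `q₁` in `Γ(u, g)` against `τ` gives the
payoff of `σ` against `τ` after `q₂` in `Γ(v, g)`, so player 1 guarantees at least as much under `u`
as under `v`.

For the converse one would separate `{q.u}` from `{v.q}`, but these sets need not be compact.
Instead garblings are relaxed to substochastic kernels, which form a compact convex set, and
`K × ℕ × ℕ` is extended by the one-sided marginals. If the two relaxed sets meet, the marginals show
that neither kernel loses mass on the signals that occur, so both come from garblings. If they are
disjoint, Hahn–Banach separates them by a continuous functional on a product of lines, which depends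
on finitely many coordinates only. It is therefore the expectation of a function that is constant in
each signal beyond some `L`, and penalizing actions above `L` turns that function into a payoff
function for which `v` is worth more than `u`.
-/

open Filter Topology

section Expectation

variable {α β ι : Type*} {C D : ℝ}

/-- Expectation of a real function under a discrete distribution. It is only meaningful when the
series converges absolutely, for instance for bounded `f`. -/
noncomputable def expect (P : PMF α) (f : α → ℝ) : ℝ := ∑' x, (P x).toReal * f x

lemma hasSum_toReal (P : PMF α) : HasSum (fun x => (P x).toReal) 1 := by
  simpa only [← ENNReal.tsum_toReal_eq P.apply_ne_top, P.tsum_coe, ENNReal.toReal_one] using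
    ENNReal.hasSum_toReal P.tsum_coe_ne_top

lemma norm_toReal_mul_le (P : PMF α) {f : α → ℝ} (hf : ∀ x, |f x| ≤ C) (x : α) :
    ‖(P x).toReal * f x‖ ≤ (P x).toReal * C := by
  rw [norm_mul, Real.norm_of_nonneg ENNReal.toReal_nonneg]
  exact mul_le_mul_of_nonneg_left (hf x) ENNReal.toReal_nonneg

lemma summable_toReal_mul (P : PMF α) {f : α → ℝ} (hf : ∀ x, |f x| ≤ C) :
    Summable fun x => (P x).toReal * f x :=
  .of_norm_bounded ((hasSum_toReal P).summable.mul_right C) (norm_toReal_mul_le P hf)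

lemma expect_const (P : PMF α) (c : ℝ) : expect P (fun _ => c) = c := by
  rw [expect, tsum_mul_right, (hasSum_toReal P).tsum_eq, one_mul]

lemma expect_const_mul (P : PMF α) (c : ℝ) (f : α → ℝ) :
    expect P (fun x => c * f x) = c * expect P f := by
  simp only [expect, mul_left_comm _ c, tsum_mul_left]

lemma expect_mul_const (P : PMF α) (f : α → ℝ) (c : ℝ) :
    expect P (fun x => f x * c) = expect P f * c := by
  simp only [expect, ← mul_assoc, tsum_mul_right]

lemma expect_add (P : PMF α) {f g : α → ℝ} (hf : ∀ x, |f x| ≤ C) (hg : ∀ x, |g x| ≤ D) :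
    expect P (fun x => f x + g x) = expect P f + expect P g := by
  simp only [expect, mul_add]
  exact (summable_toReal_mul P hf).tsum_add (summable_toReal_mul P hg)

lemma expect_convexComb (P : PMF α) {f g : α → ℝ} (hf : ∀ x, |f x| ≤ C)
    (hg : ∀ x, |g x| ≤ D) (a b : ℝ) :
    expect P (fun x => a * f x + b * g x) = a * expect P f + b * expect P g := by
  have hscale {h : α → ℝ} {B : ℝ} (hh : ∀ x, |h x| ≤ B) (c : ℝ) (x : α) : |c * h x| ≤ |c| * B := by
    rw [abs_mul]
    exact mul_le_mul_of_nonneg_left (hh x) (abs_nonneg c)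
  rw [expect_add P (hscale hf a) (hscale hg b), expect_const_mul, expect_const_mul]

lemma expect_finsetSum (P : PMF α) (s : Finset ι) {f : ι → α → ℝ} {C : ι → ℝ}
    (hf : ∀ i x, |f i x| ≤ C i) :
    expect P (fun x => ∑ i ∈ s, f i x) = ∑ i ∈ s, expect P (f i) := by
  simp only [expect, Finset.mul_sum]
  exact Summable.tsum_finsetSum fun i _ => summable_toReal_mul P (hf i)

lemma expect_mono (P : PMF α) {f g : α → ℝ} (hf : ∀ x, |f x| ≤ C) (hg : ∀ x, |g x| ≤ D)
    (h : ∀ x, f x ≤ g x) : expect P f ≤ expect P g :=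
  (summable_toReal_mul P hf).tsum_le_tsum
    (fun x => mul_le_mul_of_nonneg_left (h x) ENNReal.toReal_nonneg) (summable_toReal_mul P hg)

lemma eq_on_support_of_le_of_expect_eq (P : PMF α) {f g : α → ℝ} (hf : ∀ x, |f x| ≤ C)
    (hg : ∀ x, |g x| ≤ D) (hle : ∀ x, f x ≤ g x) (heq : expect P f = expect P g) :
    ∀ x ∈ P.support, f x = g x := by
  intro x hx
  by_contra hne
  have hpos : 0 < (P x).toReal :=
    ENNReal.toReal_pos ((P.mem_support_iff x).1 hx) (P.apply_ne_top x)
  exact heq.not_lt <| Summable.tsum_lt_tsum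
    (fun y => mul_le_mul_of_nonneg_left (hle y) ENNReal.toReal_nonneg)
    (mul_lt_mul_of_pos_left ((hle x).lt_of_ne hne) hpos)
    (summable_toReal_mul P hf) (summable_toReal_mul P hg)

lemma abs_expect_le (P : PMF α) {f : α → ℝ} (hf : ∀ x, |f x| ≤ C) : |expect P f| ≤ C := by
  have h := tsum_of_norm_bounded ((hasSum_toReal P).mul_right C) (norm_toReal_mul_le P hf)
  rwa [one_mul] at h

lemma expect_congr (P : PMF α) {f g : α → ℝ} (h : ∀ x ∈ P.support, f x = g x) :
    expect P f = expect P g := by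
  refine tsum_congr fun x => ?_
  by_cases hx : P x = 0
  · simp [hx]
  · rw [h x ((P.mem_support_iff x).2 hx)]

lemma expect_pure (a : α) (f : α → ℝ) : expect (PMF.pure a) f = f a := by
  rw [expect, tsum_eq_single a fun b hb => by simp [hb]]
  simp

lemma expect_toReal_pure (P : PMF α) (a : α) :
    expect P (fun x => (PMF.pure x a).toReal) = (P a).toReal := by
  rw [expect, tsum_eq_single a fun b hb => by simp [hb.symm]]
  simp

lemma expect_bind (P : PMF α) (Q : α → PMF β) {f : β → ℝ} (hf : ∀ y, |f y| ≤ C) :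
    expect (P.bind Q) f = expect P fun x => expect (Q x) f := by
  have hjoint : Summable fun p : α × β => (P p.1).toReal * (Q p.1 p.2).toReal := by
    have hnonneg : (0 : α × β → ℝ) ≤ fun p => (P p.1).toReal * (Q p.1 p.2).toReal :=
      fun p => mul_nonneg ENNReal.toReal_nonneg ENNReal.toReal_nonneg
    refine (summable_prod_of_nonneg hnonneg).2
      ⟨fun x => (hasSum_toReal (Q x)).summable.mul_left (P x).toReal, ?_⟩
    have hinner (x : α) : ∑' y, (P x).toReal * (Q x y).toReal = (P x).toReal := by
      rw [tsum_mul_left, (hasSum_toReal (Q x)).tsum_eq, mul_one]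
    simpa only [hinner] using (hasSum_toReal P).summable
  have hjoint_mul : Summable fun p : α × β => (P p.1).toReal * (Q p.1 p.2).toReal * f p.2 := by
    refine .of_norm_bounded (hjoint.mul_right C) fun p => ?_
    rw [mul_assoc, norm_mul, Real.norm_of_nonneg ENNReal.toReal_nonneg, mul_assoc]
    exact mul_le_mul_of_nonneg_left (norm_toReal_mul_le (Q p.1) hf p.2) ENNReal.toReal_nonneg
  have hbind (y : β) : ((P.bind Q) y).toReal * f y
      = ∑' x, (P x).toReal * (Q x y).toReal * f y := by
    rw [PMF.bind_apply, ENNReal.tsum_toReal_eq fun x =>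
      ENNReal.mul_ne_top (P.apply_ne_top x) ((Q x).apply_ne_top y), tsum_mul_right]
    simp only [ENNReal.toReal_mul]
  calc expect (P.bind Q) f
      = ∑' (y) (x), (P x).toReal * (Q x y).toReal * f y := tsum_congr hbind
    _ = ∑' (x) (y), (P x).toReal * (Q x y).toReal * f y := Summable.tsum_comm hjoint_mul
    _ = expect P fun x => expect (Q x) f := by simp only [expect, mul_assoc, tsum_mul_left]

lemma expect_map (P : PMF α) (φ : α → β) {f : β → ℝ} (hf : ∀ y, |f y| ≤ C) :
    expect (P.map φ) f = expect P fun x => f (φ x) := by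
  rw [PMF.map, expect_bind P _ hf]
  simp only [Function.comp_apply, expect_pure]

lemma tendsto_expect (P : PMF α) {l : Filter ι} {f : ι → α → ℝ} {g : α → ℝ}
    (hb : ∀ᶠ i in l, ∀ x, |f i x| ≤ C) (h : ∀ x, Tendsto (f · x) l (𝓝 (g x))) :
    Tendsto (fun i => expect P (f i)) l (𝓝 (expect P g)) :=
  tendsto_tsum_of_dominated_convergence ((hasSum_toReal P).summable.mul_right C)
    (fun x => (h x).const_mul _) (hb.mono fun _ hi => norm_toReal_mul_le P hi)

lemma hasSum_expect (P : PMF α) {f : ι → α → ℝ} {g : α → ℝ} (h0 : ∀ i x, 0 ≤ f i x)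
    (hf : ∀ x, HasSum (f · x) (g x)) (hg : ∀ x, g x ≤ C) :
    HasSum (fun i => expect P (f i)) (expect P g) := by
  have hle (s : Finset ι) (x : α) : |∑ i ∈ s, f i x| ≤ C := by
    rw [abs_of_nonneg (Finset.sum_nonneg fun i _ => h0 i x)]
    exact (sum_le_hasSum s (fun i _ => h0 i x) (hf x)).trans (hg x)
  have hterm (i : ι) (x : α) : |f i x| ≤ C := by simpa using hle {i} x
  unfold HasSum
  simpa only [expect_finsetSum P _ hterm] using
    tendsto_expect P (.of_forall hle) hf

end Expectation

section Games

variable {K : Type}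

lemma garbleLeft_garbleLeft (σ q : Garbling) (u : InfoStruct K) :
    garbleLeft σ (garbleLeft q u) = garbleLeft (compGarble σ q) u := by
  simp only [garbleLeft, compGarble, PMF.bind_bind, PMF.bind_map, PMF.map_bind, Function.comp_def]

lemma garbleRight_garbleRight (u : InfoStruct K) (q τ : Garbling) :
    garbleRight (garbleRight u q) τ = garbleRight u (compGarble τ q) := by
  simp only [garbleRight, compGarble, PMF.bind_bind, PMF.bind_map, PMF.map_bind, Function.comp_def]

lemma garbleRight_garbleLeft (u : InfoStruct K) (σ τ : Garbling) :
    garbleRight (garbleLeft σ u) τ = garbleLeft σ (garbleRight u τ) := by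
  simp only [garbleLeft, garbleRight, PMF.bind_bind, PMF.map, Function.comp_def, PMF.pure_bind]
  congr 1
  ext1 x
  exact PMF.bind_comm _ _ _

lemma garbleLeft_pure (u : InfoStruct K) : garbleLeft PMF.pure u = u := by
  simp only [garbleLeft, PMF.pure_map]
  exact PMF.bind_pure u

lemma garbleRight_pure (u : InfoStruct K) : garbleRight u PMF.pure = u := by
  simp only [garbleRight, PMF.pure_map]
  exact PMF.bind_pure u

/-- The joint law of the state and the two actions when the strategies `σ` and `τ` are played. As a
strategy is a garbling into actions, this is `σ.u.τ`. -/
noncomputable def outcome (u : InfoStruct K) (σ τ : Garbling) : InfoStruct K :=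
  garbleRight (garbleLeft σ u) τ

lemma expect_outcome (u : InfoStruct K) (σ τ : Garbling) {f : K × ℕ × ℕ → ℝ} {C : ℝ}
    (hf : ∀ x, |f x| ≤ C) :
    expect (outcome u σ τ) f = expect u fun x =>
      expect (σ x.2.1) fun i => expect (τ x.2.2) fun j => f (x.1, i, j) := by
  have habs (x : K × ℕ × ℕ) : |expect (τ x.2.2) fun j => f (x.1, x.2.1, j)| ≤ C :=
    abs_expect_le _ fun _ => hf _
  rw [outcome, garbleRight, expect_bind _ _ hf]
  simp only [expect_map _ _ hf]
  rw [garbleLeft, expect_bind _ _ habs]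
  simp only [expect_map _ _ habs]

lemma payoff_eq_expect_outcome (u : InfoStruct K) {g : K → ℕ → ℕ → ℝ} {C : ℝ}
    (hg : ∀ k i j, |g k i j| ≤ C) (σ τ : Garbling) :
    payoff u g σ τ = expect (outcome u σ τ) fun x => g x.1 x.2.1 x.2.2 := by
  rw [expect_outcome u σ τ fun x => hg x.1 x.2.1 x.2.2]
  simp only [payoff, expect, mul_assoc, tsum_mul_left]

lemma IsPayoff.abs_le {g : K → ℕ → ℕ → ℝ} (hg : IsPayoff g) (k : K) (i j : ℕ) :
    |g k i j| ≤ 1 :=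
  let ⟨_, hIcc, _⟩ := hg
  _root_.abs_le.2 (hIcc k i j)

lemma IsPayoff.abs_payoff_le (u : InfoStruct K) {g : K → ℕ → ℕ → ℝ} (hg : IsPayoff g)
    (σ τ : Garbling) : |payoff u g σ τ| ≤ 1 := by
  rw [payoff_eq_expect_outcome u hg.abs_le]
  exact abs_expect_le _ fun _ => hg.abs_le _ _ _

lemma IsPayoff.bddBelow_payoff (u : InfoStruct K) {g : K → ℕ → ℕ → ℝ} (hg : IsPayoff g)
    (σ : Garbling) : BddBelow (Set.range (payoff u g σ)) :=
  ⟨-1, Set.forall_mem_range.2 fun τ => (_root_.abs_le.1 (hg.abs_payoff_le u σ τ)).1⟩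

lemma IsPayoff.val_le {u : InfoStruct K} {g : K → ℕ → ℕ → ℝ} (hg : IsPayoff g) {a : ℝ}
    (τ : Garbling) (h : ∀ σ, payoff u g σ τ ≤ a) : val u g ≤ a :=
  ciSup_le fun σ => (ciInf_le (hg.bddBelow_payoff u σ) τ).trans (h σ)

lemma IsPayoff.le_val {u : InfoStruct K} {g : K → ℕ → ℕ → ℝ} (hg : IsPayoff g) {a : ℝ}
    (σ : Garbling) (h : ∀ τ, a ≤ payoff u g σ τ) : a ≤ val u g := by
  have hbdd : BddAbove (Set.range fun σ' => ⨅ τ, payoff u g σ' τ) :=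
    ⟨1, Set.forall_mem_range.2 fun σ' => (ciInf_le (hg.bddBelow_payoff u σ') PMF.pure).trans
      (_root_.abs_le.1 (hg.abs_payoff_le u σ' _)).2⟩
  exact le_ciSup_of_le hbdd σ (le_ciInf h)

lemma payoff_eq_of_garbleLeft_eq_garbleRight {u v : InfoStruct K} {q₁ q₂ : Garbling}
    (h : garbleLeft q₁ u = garbleRight v q₂) {g : K → ℕ → ℕ → ℝ} (hg : IsPayoff g)
    (σ τ : Garbling) : payoff u g (compGarble σ q₁) τ = payoff v g σ (compGarble τ q₂) := by
  rw [payoff_eq_expect_outcome u hg.abs_le, payoff_eq_expect_outcome v hg.abs_le, outcome,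
    ← garbleLeft_garbleLeft, h, ← garbleRight_garbleLeft, garbleRight_garbleRight, outcome]

lemma val_le_val_of_garbleLeft_eq_garbleRight {u v : InfoStruct K} {q₁ q₂ : Garbling}
    (h : garbleLeft q₁ u = garbleRight v q₂) {g : K → ℕ → ℕ → ℝ} (hg : IsPayoff g) :
    val v g ≤ val u g := by
  refine ciSup_le fun σ => hg.le_val (compGarble σ q₁) fun τ => ?_
  rw [payoff_eq_of_garbleLeft_eq_garbleRight h hg]
  exact ciInf_le (hg.bddBelow_payoff v σ) _

/-- The payoff function in `𝒢` obtained from `h` by penalizing every action beyond `L`. The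
penalties never help the player who incurs them. -/
noncomputable def cutoff (L : ℕ) (h : K × ℕ × ℕ → ℝ) (k : K) (i j : ℕ) : ℝ :=
  if L < i then -1 else if L < j then 1 else h (k, i, j)

lemma isPayoff_cutoff (L : ℕ) {h : K × ℕ × ℕ → ℝ} (hh : ∀ x, |h x| ≤ 1) :
    IsPayoff (cutoff L h) := by
  refine ⟨L + 1, fun k i j => ?_, fun k i j hi => if_pos hi, fun k i j hi hj => ?_⟩
  · unfold cutoff
    split_ifs
    · norm_num
    · norm_num
    · exact abs_le.1 (hh _)
  · rw [cutoff, if_neg (Nat.lt_succ_iff.1 hi).not_gt, if_pos (Nat.lt_of_succ_le hj)]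

/-- The pure strategy that plays the signal received, truncated at `L`. -/
noncomputable def truncation (L : ℕ) : Garbling := fun n => PMF.pure (min n L)

lemma expect_truncation (L : ℕ) (n : ℕ) (f : ℕ → ℝ) :
    expect (truncation L n) f = f (min n L) :=
  expect_pure _ _

lemma payoff_cutoff_truncation_le (u : InfoStruct K) {L : ℕ} {h : K × ℕ × ℕ → ℝ}
    (hh : ∀ x, |h x| ≤ 1) (hL : ∀ k i j, h (k, min i L, min j L) = h (k, i, j)) (σ : Garbling) :
    payoff u (cutoff L h) σ (truncation L) ≤ expect (garbleLeft σ u) h := by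
  have hg := (isPayoff_cutoff L hh).abs_le
  have hpoint (k : K) (i j : ℕ) : cutoff L h k i (min j L) ≤ h (k, i, j) := by
    rw [cutoff, if_neg (min_le_right j L).not_gt]
    split_ifs with hi
    · exact (abs_le.1 (hh _)).1
    · exact (by simpa only [min_eq_left (not_lt.1 hi)] using hL k i j : _ = _).le
  rw [payoff_eq_expect_outcome u hg, outcome, garbleRight, expect_bind _ _ fun _ => hg _ _ _]
  refine expect_mono _ (fun _ => abs_expect_le _ fun _ => hg _ _ _) hh fun x => ?_
  rw [expect_map _ _ fun _ => hg _ _ _, expect_truncation]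
  exact hpoint _ _ _

lemma le_payoff_cutoff_truncation (u : InfoStruct K) {L : ℕ} {h : K × ℕ × ℕ → ℝ}
    (hh : ∀ x, |h x| ≤ 1) (hL : ∀ k i j, h (k, min i L, min j L) = h (k, i, j)) (τ : Garbling) :
    expect (garbleRight u τ) h ≤ payoff u (cutoff L h) (truncation L) τ := by
  have hg := (isPayoff_cutoff L hh).abs_le
  have hpoint (k : K) (i j : ℕ) : h (k, i, j) ≤ cutoff L h k (min i L) j := by
    rw [cutoff, if_neg (min_le_right i L).not_gt]
    split_ifs with hj
    · exact (abs_le.1 (hh _)).2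
    · exact (by simpa only [min_eq_left (not_lt.1 hj)] using (hL k i j).symm : _ = _).le
  rw [payoff_eq_expect_outcome u hg, outcome, garbleRight_garbleLeft, garbleLeft,
    expect_bind _ _ fun _ => hg _ _ _]
  refine expect_mono _ hh (fun _ => abs_expect_le _ fun _ => hg _ _ _) fun x => ?_
  rw [expect_map _ _ fun _ => hg _ _ _, expect_truncation]
  exact hpoint _ _ _

lemma val_cutoff_lt_val_cutoff {u v : InfoStruct K} {L : ℕ} {h : K × ℕ × ℕ → ℝ} {a b : ℝ}
    (hh : ∀ x, |h x| ≤ 1) (hL : ∀ k i j, h (k, min i L, min j L) = h (k, i, j)) (hab : a < b)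
    (hu : ∀ σ, expect (garbleLeft σ u) h ≤ a) (hv : ∀ τ, b ≤ expect (garbleRight v τ) h) :
    val u (cutoff L h) < val v (cutoff L h) :=
  have hg := isPayoff_cutoff L hh
  calc val u (cutoff L h)
      ≤ a := hg.val_le _ fun σ => (payoff_cutoff_truncation_le u hh hL σ).trans (hu σ)
    _ < b := hab
    _ ≤ val v (cutoff L h) := hg.le_val _ fun τ =>
      (hv τ).trans (le_payoff_cutoff_truncation v hh hL τ)

lemma exists_isPayoff_val_lt_val {u v : InfoStruct K} {L : ℕ} {h : K × ℕ × ℕ → ℝ} {C a b : ℝ}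
    (hh : ∀ x, |h x| ≤ C) (hL : ∀ k i j, h (k, min i L, min j L) = h (k, i, j)) (hab : a < b)
    (hu : ∀ σ, expect (garbleLeft σ u) h ≤ a) (hv : ∀ τ, b ≤ expect (garbleRight v τ) h) :
    ∃ g, IsPayoff g ∧ val u g < val v g := by
  have hpos : 0 < max C 1 := lt_max_of_lt_right one_pos
  have hscaled (x : K × ℕ × ℕ) : |(max C 1)⁻¹ * h x| ≤ 1 := by
    rw [abs_mul, abs_inv, abs_of_pos hpos, inv_mul_le_one₀ hpos]
    exact (hh x).trans (le_max_left C 1)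
  have hab' : (max C 1)⁻¹ * a < (max C 1)⁻¹ * b := by gcongr
  refine ⟨_, isPayoff_cutoff L hscaled, val_cutoff_lt_val_cutoff hscaled
    (fun k i j => congrArg _ (hL k i j)) hab' (fun σ => ?_) fun τ => ?_⟩
  · rw [expect_const_mul]
    gcongr
    exact hu σ
  · rw [expect_const_mul]
    gcongr
    exact hv τ

end Games

section Subkernels

/-- The subprobability vectors on `ℕ`. Unlike the probability vectors they form a compact set for
pointwise convergence, since mass may escape to infinity. -/
def subprobs : Set (ℕ → ℝ) := {w | 0 ≤ w ∧ ∀ F : Finset ℕ, ∑ i ∈ F, w i ≤ 1}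

lemma le_one_of_mem_subprobs {w : ℕ → ℝ} (hw : w ∈ subprobs) (i : ℕ) : w i ≤ 1 := by
  simpa using hw.2 {i}

lemma summable_of_mem_subprobs {w : ℕ → ℝ} (hw : w ∈ subprobs) : Summable w :=
  summable_of_sum_le hw.1 hw.2

lemma tsum_le_one_of_mem_subprobs {w : ℕ → ℝ} (hw : w ∈ subprobs) : ∑' i, w i ≤ 1 :=
  (summable_of_mem_subprobs hw).tsum_le_of_sum_le hw.2

lemma isCompact_subprobs : IsCompact subprobs := by
  refine (isCompact_univ_pi fun _ : ℕ => isCompact_Icc (a := (0 : ℝ)) (b := 1)).of_isClosed_subset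
    ?_ fun w hw i _ => ⟨hw.1 i, le_one_of_mem_subprobs hw i⟩
  have hinter : subprobs = Set.Ici 0 ∩ ⋂ F : Finset ℕ, {w | ∑ i ∈ F, w i ≤ 1} := by
    ext w
    simp only [subprobs, Set.mem_ofPred_eq, Set.mem_inter_iff, Set.mem_Ici, Set.mem_iInter]
  rw [hinter]
  exact isClosed_Ici.inter <| isClosed_iInter fun F => isClosed_le (by fun_prop) continuous_const

lemma convex_subprobs : Convex ℝ subprobs := by
  intro w hw w' hw' a b ha hb hab
  refine ⟨add_nonneg (smul_nonneg ha hw.1) (smul_nonneg hb hw'.1), fun F => ?_⟩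
  calc ∑ i ∈ F, (a • w + b • w') i
      = a * ∑ i ∈ F, w i + b * ∑ i ∈ F, w' i := by
        simp only [Pi.add_apply, Pi.smul_apply, smul_eq_mul, Finset.sum_add_distrib,
          Finset.mul_sum]
    _ ≤ a * 1 + b * 1 := by gcongr; exacts [hw.2 F, hw'.2 F]
    _ = 1 := by rw [mul_one, mul_one, hab]

/-- The substochastic kernels on `ℕ`, which compactify the garblings. -/
def subkernels : Set (ℕ → ℕ → ℝ) := Set.univ.pi fun _ => subprobs

lemma isCompact_subkernels : IsCompact subkernels := isCompact_univ_pi fun _ => isCompact_subprobs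

lemma convex_subkernels : Convex ℝ subkernels := convex_pi fun _ _ => convex_subprobs

/-- The kernel of transition probabilities of a garbling. -/
noncomputable def weight (q : Garbling) (n i : ℕ) : ℝ := (q n i).toReal

lemma weight_mem_subkernels (q : Garbling) : weight q ∈ subkernels := fun n _ =>
  ⟨fun _ => ENNReal.toReal_nonneg,
    fun F => sum_le_hasSum F (fun _ _ => ENNReal.toReal_nonneg) (hasSum_toReal (q n))⟩

lemma exists_garbling_weight_eq {s : ℕ → ℕ → ℝ} (hs : s ∈ subkernels) :
    ∃ q : Garbling, ∀ n, HasSum (s n) 1 → weight q n = s n := by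
  have hrow (n : ℕ) : ∃ P : PMF ℕ, HasSum (s n) 1 → (fun i => (P i).toReal) = s n := by
    by_cases h : HasSum (s n) 1
    · have h0 : 0 ≤ s n := (hs n trivial).1
      have hsum : HasSum (fun i => ENNReal.ofReal (s n i)) 1 := by
        rw [ENNReal.summable.hasSum_iff, ← ENNReal.ofReal_tsum_of_nonneg h0 h.summable, h.tsum_eq,
          ENNReal.ofReal_one]
      exact ⟨⟨_, hsum⟩, fun _ => funext fun i => ENNReal.toReal_ofReal (h0 i)⟩
    · exact ⟨PMF.pure 0, fun h' => absurd h' h⟩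
  choose q hq using hrow
  exact ⟨q, hq⟩

/-- Adjoins to a weight vector the coordinate `none`, standing for the total mass. It is `1` by
definition, so comparing it with the coordinates `some i` detects lost mass. -/
def withTotal (w : ℕ → ℝ) (o : Option ℕ) : ℝ := o.elim 1 w

lemma withTotal_nonneg {w : ℕ → ℝ} (hw : w ∈ subprobs) (o : Option ℕ) : 0 ≤ withTotal w o := by
  cases o
  · exact zero_le_one
  · exact hw.1 _

lemma withTotal_le_one {w : ℕ → ℝ} (hw : w ∈ subprobs) (o : Option ℕ) : withTotal w o ≤ 1 := by
  cases o
  · exact le_rfl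
  · exact le_one_of_mem_subprobs hw _

lemma withTotal_convexComb (w w' : ℕ → ℝ) {a b : ℝ} (hab : a + b = 1) (o : Option ℕ) :
    withTotal (a • w + b • w') o = a * withTotal w o + b * withTotal w' o := by
  cases o
  · simpa only [withTotal, Option.elim_none, mul_one] using hab.symm
  · rfl

lemma continuous_withTotal (o : Option ℕ) : Continuous (withTotal · o) := by
  cases o
  · exact continuous_const
  · exact continuous_apply _

lemma expect_withTotal_pure (P : PMF ℕ) (o : Option ℕ) :
    expect P (fun i => withTotal (weight PMF.pure i) o) = withTotal (fun i => (P i).toReal) o := by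
  cases o
  · exact expect_const P 1
  · exact expect_toReal_pure P _

lemma eventually_withTotal_pure_min (o : Option ℕ) :
    ∀ᶠ L in atTop, ∀ i,
      withTotal (weight PMF.pure (min i L)) o = withTotal (weight PMF.pure i) o := by
  cases o with
  | none => exact .of_forall fun _ _ => rfl
  | some n =>
    filter_upwards [eventually_gt_atTop n] with L hL i
    have hiff : n = min i L ↔ n = i := by omega
    simp only [withTotal, Option.elim_some, weight, PMF.pure_apply]
    congr 2
    exact propext hiff

end Subkernels

section Moments

variable {K : Type}

/-- The probability that a state-signal triple `x` gives to the cell `y` of `K × ℕ × ℕ` once its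
signals are redrawn through the kernels `s` and `t`; a coordinate `none` of `y` imposes no
condition on the corresponding signal. -/
noncomputable def cellProb (s t : ℕ → ℕ → ℝ) (y : K × Option ℕ × Option ℕ) (x : K × ℕ × ℕ) : ℝ :=
  Set.indicator {y.1} 1 x.1 * withTotal (s x.2.1) y.2.1 * withTotal (t x.2.2) y.2.2

/-- The cell probabilities, one-sided marginals included, of `u` garbled through the kernels `s` and
`t`. -/
noncomputable def moment (u : InfoStruct K) (s t : ℕ → ℕ → ℝ) (y : K × Option ℕ × Option ℕ) : ℝ :=
  expect u (cellProb s t y)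

lemma abs_cellProb_le {s t : ℕ → ℕ → ℝ} (hs : s ∈ subkernels) (ht : t ∈ subkernels)
    (y : K × Option ℕ × Option ℕ) (x : K × ℕ × ℕ) : |cellProb s t y x| ≤ 1 := by
  have hs0 := withTotal_nonneg (hs x.2.1 trivial) y.2.1
  have hs1 := withTotal_le_one (hs x.2.1 trivial) y.2.1
  have ht0 := withTotal_nonneg (ht x.2.2 trivial) y.2.2
  have ht1 := withTotal_le_one (ht x.2.2 trivial) y.2.2
  by_cases hk : x.1 ∈ ({y.1} : Set K)
  · rw [cellProb, Set.indicator_of_mem hk, Pi.one_apply, one_mul, abs_of_nonneg (by positivity)]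
    exact mul_le_one₀ hs1 ht0 ht1
  · simp only [cellProb, Set.indicator_of_notMem hk, zero_mul, abs_zero, zero_le_one]

lemma continuousOn_moment (u : InfoStruct K) :
    ContinuousOn (fun p : (ℕ → ℕ → ℝ) × (ℕ → ℕ → ℝ) => moment u p.1 p.2)
      (subkernels ×ˢ subkernels) := by
  refine continuousOn_pi.2 fun y p _ => tendsto_expect u
    (eventually_mem_nhdsWithin.mono fun p' hp' => abs_cellProb_le hp'.1 hp'.2 y) fun x => ?_
  have hs : Continuous fun p : (ℕ → ℕ → ℝ) × (ℕ → ℕ → ℝ) => withTotal (p.1 x.2.1) y.2.1 :=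
    (continuous_withTotal y.2.1).comp (by fun_prop)
  have ht : Continuous fun p : (ℕ → ℕ → ℝ) × (ℕ → ℕ → ℝ) => withTotal (p.2 x.2.2) y.2.2 :=
    (continuous_withTotal y.2.2).comp (by fun_prop)
  exact ((continuous_const.mul hs).mul ht).continuousWithinAt

lemma isCompact_image_moment_left (u : InfoStruct K) {t : ℕ → ℕ → ℝ} (ht : t ∈ subkernels) :
    IsCompact ((fun s => moment u s t) '' subkernels) :=
  isCompact_subkernels.image_of_continuousOn <|
    (continuousOn_moment u).comp (Continuous.prodMk_left t).continuousOn fun _ hs => ⟨hs, ht⟩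

lemma isCompact_image_moment_right (u : InfoStruct K) {s : ℕ → ℕ → ℝ} (hs : s ∈ subkernels) :
    IsCompact (moment u s '' subkernels) :=
  isCompact_subkernels.image_of_continuousOn <|
    (continuousOn_moment u).comp (Continuous.prodMk_right s).continuousOn fun _ ht => ⟨hs, ht⟩

lemma convex_image_moment_left (u : InfoStruct K) {t : ℕ → ℕ → ℝ} (ht : t ∈ subkernels) :
    Convex ℝ ((fun s => moment u s t) '' subkernels) := by
  rintro _ ⟨s, hs, rfl⟩ _ ⟨s', hs', rfl⟩ a b ha hb hab
  refine ⟨a • s + b • s', convex_subkernels hs hs' ha hb hab, funext fun y => ?_⟩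
  simp only [moment, Pi.add_apply, Pi.smul_apply, smul_eq_mul]
  rw [← expect_convexComb u (abs_cellProb_le hs ht y) (abs_cellProb_le hs' ht y)]
  refine congrArg (expect u) (funext fun x => ?_)
  simp only [cellProb, Pi.add_apply, Pi.smul_apply, withTotal_convexComb _ _ hab]
  ring

lemma convex_image_moment_right (u : InfoStruct K) {s : ℕ → ℕ → ℝ} (hs : s ∈ subkernels) :
    Convex ℝ (moment u s '' subkernels) := by
  rintro _ ⟨t, ht, rfl⟩ _ ⟨t', ht', rfl⟩ a b ha hb hab
  refine ⟨a • t + b • t', convex_subkernels ht ht' ha hb hab, funext fun y => ?_⟩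
  simp only [moment, Pi.add_apply, Pi.smul_apply, smul_eq_mul]
  rw [← expect_convexComb u (abs_cellProb_le hs ht y) (abs_cellProb_le hs ht' y)]
  refine congrArg (expect u) (funext fun x => ?_)
  simp only [cellProb, Pi.add_apply, Pi.smul_apply, withTotal_convexComb _ _ hab]
  ring

lemma moment_outcome_pure (u : InfoStruct K) (σ τ : Garbling) :
    moment (outcome u σ τ) (weight PMF.pure) (weight PMF.pure) =
      moment u (weight σ) (weight τ) := by
  ext y
  have hbound := abs_cellProb_le (weight_mem_subkernels PMF.pure) (weight_mem_subkernels PMF.pure) y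
  rw [moment, expect_outcome u σ τ hbound]
  simp only [cellProb, expect_const_mul, expect_mul_const, expect_withTotal_pure]
  rfl

lemma moment_pure_some (P : InfoStruct K) (x : K × ℕ × ℕ) :
    moment P (weight PMF.pure) (weight PMF.pure) (x.1, some x.2.1, some x.2.2) = (P x).toReal := by
  classical
  rw [← expect_toReal_pure P x]
  refine congrArg (expect P) (funext fun x' => ?_)
  obtain ⟨k, c, d⟩ := x
  obtain ⟨k', c', d'⟩ := x'
  simp only [cellProb, withTotal, weight, PMF.pure_apply, Set.indicator_apply,
    Option.elim_some, Prod.mk.injEq, Set.mem_singleton_iff]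
  split_ifs <;> simp_all

lemma outcome_eq_of_moment_eq {u v : InfoStruct K} {σ τ σ' τ' : Garbling}
    (h : moment u (weight σ) (weight τ) = moment v (weight σ') (weight τ')) :
    outcome u σ τ = outcome v σ' τ' := by
  ext x
  rw [← ENNReal.toReal_eq_toReal_iff' (PMF.apply_ne_top _ _) (PMF.apply_ne_top _ _),
    ← moment_pure_some, ← moment_pure_some, moment_outcome_pure, moment_outcome_pure, h]

lemma moment_congr (u : InfoStruct K) {s s' t t' : ℕ → ℕ → ℝ}
    (hs : ∀ x ∈ u.support, s x.2.1 = s' x.2.1) (ht : ∀ x ∈ u.support, t x.2.2 = t' x.2.2) :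
    moment u s t = moment u s' t' :=
  funext fun y => expect_congr u fun x hx => by rw [cellProb, hs x hx, ht x hx, cellProb]

end Moments

section TotalMass

variable {α : Type*} {φ : α → ℝ} {s t : ℕ → ℕ → ℝ}

lemma hasSum_expect_mul (P : PMF α) (hφ : ∀ x, φ x ∈ Set.Icc 0 1) (n : α → ℕ)
    (hs : s ∈ subkernels) :
    HasSum (fun i => expect P fun x => φ x * s (n x) i)
      (expect P fun x => φ x * ∑' i, s (n x) i) := by
  have hs' (x : α) : s (n x) ∈ subprobs := hs (n x) trivial
  exact hasSum_expect P (fun i x => mul_nonneg (hφ x).1 ((hs' x).1 i))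
    (fun x => (summable_of_mem_subprobs (hs' x)).hasSum.mul_left (φ x))
    fun x => mul_le_one₀ (hφ x).2 (tsum_nonneg (hs' x).1) (tsum_le_one_of_mem_subprobs (hs' x))

lemma hasSum_expect_mul_weight (P : PMF α) (hφ : ∀ x, φ x ∈ Set.Icc 0 1) (n : α → ℕ)
    (q : Garbling) : HasSum (fun i => expect P fun x => φ x * weight q (n x) i) (expect P φ) := by
  have htotal (x : α) : ∑' i, weight q (n x) i = 1 := (hasSum_toReal (q (n x))).tsum_eq
  simpa only [htotal, mul_one] using hasSum_expect_mul P hφ n (weight_mem_subkernels q)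

lemma hasSum_one_of_hasSum_expect_mul (P : PMF α) (hφ : ∀ x, φ x ∈ Set.Icc 0 1) (n : α → ℕ)
    (hs : s ∈ subkernels) (h : HasSum (fun i => expect P fun x => φ x * s (n x) i) (expect P φ))
    {x : α} (hx : x ∈ P.support) (hφx : φ x ≠ 0) : HasSum (s (n x)) 1 := by
  have hs' (y : α) : s (n y) ∈ subprobs := hs (n y) trivial
  have hle (y : α) : φ y * ∑' i, s (n y) i ≤ φ y :=
    mul_le_of_le_one_right (hφ y).1 (tsum_le_one_of_mem_subprobs (hs' y))
  have habs (y : α) : |φ y| ≤ 1 := by simpa only [abs_of_nonneg (hφ y).1] using (hφ y).2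
  have habs_mul (y : α) : |φ y * ∑' i, s (n y) i| ≤ 1 := by
    rw [abs_of_nonneg (mul_nonneg (hφ y).1 (tsum_nonneg (hs' y).1))]
    exact (hle y).trans (hφ y).2
  have hfull : φ x * ∑' i, s (n x) i = φ x :=
    eq_on_support_of_le_of_expect_eq P habs_mul habs hle
      ((hasSum_expect_mul P hφ n hs).unique h) x hx
  exact (summable_of_mem_subprobs (hs' x)).hasSum_iff.2 ((mul_eq_left₀ hφx).1 hfull)

variable {K : Type} {u v : InfoStruct K}

lemma indicator_singleton_one_mem_Icc (k k' : K) :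
    Set.indicator {k} (1 : K → ℝ) k' ∈ Set.Icc 0 1 :=
  ⟨Set.indicator_nonneg (fun _ _ => zero_le_one) k',
    Set.indicator_le_self' (fun _ _ => zero_le_one) k'⟩

lemma moment_some_none (u : InfoStruct K) (s t : ℕ → ℕ → ℝ) (k : K) (c : ℕ) :
    moment u s t (k, some c, none) =
      expect u fun x => Set.indicator {k} 1 x.1 * s x.2.1 c :=
  congrArg (expect u) (funext fun _ => mul_one _)

lemma moment_none_some (u : InfoStruct K) (s t : ℕ → ℕ → ℝ) (k : K) (d : ℕ) :
    moment u s t (k, none, some d) =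
      expect u fun x => Set.indicator {k} 1 x.1 * t x.2.2 d :=
  congrArg (expect u) (funext fun _ => congrArg (· * _) (mul_one _))

lemma moment_none_none (u : InfoStruct K) (s t : ℕ → ℕ → ℝ) (k : K) :
    moment u s t (k, none, none) = expect u fun x => Set.indicator {k} 1 x.1 :=
  congrArg (expect u) (funext fun _ => (mul_one _).trans (mul_one _))

lemma hasSum_one_left_of_moment_eq {σ : Garbling} {t' : ℕ → ℕ → ℝ} (hs : s ∈ subkernels)
    (h : moment u s t = moment v (weight σ) t') :
    ∀ x ∈ u.support, HasSum (s x.2.1) 1 := by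
  intro x hx
  have hφ (y : K × ℕ × ℕ) := indicator_singleton_one_mem_Icc x.1 y.1
  have hsum := hasSum_expect_mul_weight v hφ (fun y => y.2.1) σ
  simp only [← moment_some_none v _ t', ← moment_none_none v (weight σ) t', ← h] at hsum
  simp only [moment_some_none, moment_none_none] at hsum
  exact hasSum_one_of_hasSum_expect_mul u hφ (fun y => y.2.1) hs hsum hx (by simp)

lemma hasSum_one_right_of_moment_eq {τ : Garbling} {s' : ℕ → ℕ → ℝ} (ht : t ∈ subkernels)
    (h : moment v s t = moment u s' (weight τ)) :
    ∀ x ∈ v.support, HasSum (t x.2.2) 1 := by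
  intro x hx
  have hφ (y : K × ℕ × ℕ) := indicator_singleton_one_mem_Icc x.1 y.1
  have hsum := hasSum_expect_mul_weight u hφ (fun y => y.2.2) τ
  simp only [← moment_none_some u s', ← moment_none_none u s' (weight τ), ← h] at hsum
  simp only [moment_none_some, moment_none_none] at hsum
  exact hasSum_one_of_hasSum_expect_mul v hφ (fun y => y.2.2) ht hsum hx (by simp)

lemma exists_garbleLeft_eq_garbleRight_of_moment_eq (hs : s ∈ subkernels) (ht : t ∈ subkernels)
    (h : moment u s (weight PMF.pure) = moment v (weight PMF.pure) t) :
    ∃ q₁ q₂ : Garbling, garbleLeft q₁ u = garbleRight v q₂ := by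
  obtain ⟨q₁, hq₁⟩ := exists_garbling_weight_eq hs
  obtain ⟨q₂, hq₂⟩ := exists_garbling_weight_eq ht
  have hu : moment u (weight q₁) (weight PMF.pure) = moment u s (weight PMF.pure) :=
    moment_congr u (fun x hx => hq₁ _ (hasSum_one_left_of_moment_eq hs h x hx)) fun _ _ => rfl
  have hv : moment v (weight PMF.pure) (weight q₂) = moment v (weight PMF.pure) t :=
    moment_congr v (fun _ _ => rfl) fun x hx => hq₂ _ (hasSum_one_right_of_moment_eq ht h.symm x hx)
  have houtcome : outcome u q₁ PMF.pure = outcome v PMF.pure q₂ :=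
    outcome_eq_of_moment_eq (hu.trans (h.trans hv.symm))
  rw [outcome, outcome, garbleRight_pure, garbleLeft_pure] at houtcome
  exact ⟨q₁, q₂, houtcome⟩

end TotalMass

section Separation

variable {K : Type}

lemma exists_finsupp_eq_sum {ι : Type*} (f : (ι → ℝ) →L[ℝ] ℝ) :
    ∃ c : ι →₀ ℝ, ∀ a, f a = ∑ y ∈ c.support, c y * a y := by
  have hspan : f.toLinearMap ∈
      Submodule.span ℝ (Set.range (LinearMap.proj (φ := fun _ : ι => ℝ))) :=
    (LinearMap.mem_span_iff_continuous _).2 f.continuous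
  obtain ⟨c, hc⟩ := Finsupp.mem_span_range_iff_exists_finsupp.1 hspan
  refine ⟨c, fun a => ?_⟩
  rw [← ContinuousLinearMap.coe_coe, ← hc]
  simp [Finsupp.sum]

/-- The function on `K × ℕ × ℕ` whose expectation is the linear functional `c` of the moments. -/
noncomputable def cellSum (c : (K × Option ℕ × Option ℕ) →₀ ℝ) (x : K × ℕ × ℕ) : ℝ :=
  ∑ y ∈ c.support, c y * cellProb (weight PMF.pure) (weight PMF.pure) y x

lemma abs_mul_cellProb_pure_le (c : (K × Option ℕ × Option ℕ) →₀ ℝ)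
    (y : K × Option ℕ × Option ℕ) (x : K × ℕ × ℕ) :
    |c y * cellProb (weight PMF.pure) (weight PMF.pure) y x| ≤ |c y| := by
  rw [abs_mul]
  exact mul_le_of_le_one_right (abs_nonneg _)
    (abs_cellProb_le (weight_mem_subkernels _) (weight_mem_subkernels _) y x)

lemma abs_cellSum_le (c : (K × Option ℕ × Option ℕ) →₀ ℝ) (x : K × ℕ × ℕ) :
    |cellSum c x| ≤ ∑ y ∈ c.support, |c y| :=
  (Finset.abs_sum_le_sum_abs _ _).trans
    (Finset.sum_le_sum fun y _ => abs_mul_cellProb_pure_le c y x)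

lemma expect_outcome_cellSum (u : InfoStruct K) (σ τ : Garbling)
    (c : (K × Option ℕ × Option ℕ) →₀ ℝ) :
    expect (outcome u σ τ) (cellSum c) =
      ∑ y ∈ c.support, c y * moment u (weight σ) (weight τ) y := by
  rw [← moment_outcome_pure]
  exact (expect_finsetSum _ _ (abs_mul_cellProb_pure_le c)).trans
    (Finset.sum_congr rfl fun y _ => expect_const_mul _ _ _)

lemma eventually_cellSum_min_eq (c : (K × Option ℕ × Option ℕ) →₀ ℝ) :
    ∀ᶠ L in atTop, ∀ k i j, cellSum c (k, min i L, min j L) = cellSum c (k, i, j) := by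
  have hcells : ∀ᶠ L in atTop, ∀ y ∈ c.support, ∀ k i j,
      cellProb (weight PMF.pure) (weight PMF.pure) y (k, min i L, min j L) =
        cellProb (weight PMF.pure) (weight PMF.pure) y (k, i, j) := by
    refine (Finset.eventually_all _).2 fun y _ => ?_
    filter_upwards [eventually_withTotal_pure_min y.2.1, eventually_withTotal_pure_min y.2.2]
      with L hc hd k i j
    simp only [cellProb, hc, hd]
  filter_upwards [hcells] with L hL k i j
  exact Finset.sum_congr rfl fun y hy => congrArg _ (hL y hy k i j)

lemma exists_isPayoff_val_lt_val_of_disjoint {u v : InfoStruct K}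
    (h : Disjoint ((fun s => moment u s (weight PMF.pure)) '' subkernels)
      (moment v (weight PMF.pure) '' subkernels)) :
    ∃ g, IsPayoff g ∧ val u g < val v g := by
  have hpure := weight_mem_subkernels PMF.pure
  obtain ⟨f, a, b, hu, hab, hv⟩ := geometric_hahn_banach_compact_closed
    (convex_image_moment_left u hpure) (isCompact_image_moment_left u hpure)
    (convex_image_moment_right v hpure) (isCompact_image_moment_right v hpure).isClosed h
  obtain ⟨c, hc⟩ := exists_finsupp_eq_sum f
  have hexpect (w : InfoStruct K) (σ τ : Garbling) :
      expect (outcome w σ τ) (cellSum c) = f (moment w (weight σ) (weight τ)) := by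
    rw [expect_outcome_cellSum, hc]
  obtain ⟨L, hL⟩ := (eventually_cellSum_min_eq c).exists
  refine exists_isPayoff_val_lt_val (abs_cellSum_le c) hL hab (fun σ => ?_) fun τ => ?_
  · rw [← garbleRight_pure (garbleLeft σ u), ← outcome, hexpect]
    exact (hu _ ⟨_, weight_mem_subkernels σ, rfl⟩).le
  · rw [← garbleLeft_pure v, ← outcome, hexpect]
    exact (hv _ ⟨_, weight_mem_subkernels τ, rfl⟩).le

end Separation

theorem comparison_iff_garblings_general {K : Type} (u v : InfoStruct K) :
    (∀ g : K → ℕ → ℕ → ℝ, IsPayoff g → val v g ≤ val u g) ↔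
      ∃ q₁ q₂ : Garbling, garbleLeft q₁ u = garbleRight v q₂ := by
  refine ⟨fun h => ?_, fun ⟨_, _, hq⟩ _ hg => val_le_val_of_garbleLeft_eq_garbleRight hq hg⟩
  have hmeet : ¬ Disjoint ((fun s => moment u s (weight PMF.pure)) '' subkernels)
      (moment v (weight PMF.pure) '' subkernels) := fun hdisj =>
    let ⟨g, hg, hlt⟩ := exists_isPayoff_val_lt_val_of_disjoint hdisj
    (h g hg).not_gt hlt
  obtain ⟨_, ⟨s, hs, rfl⟩, t, ht, hst⟩ := Set.not_disjoint_iff.1 hmeet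
  exact exists_garbleLeft_eq_garbleRight_of_moment_eq hs ht hst.symm

/-- `u ⪰ v` (player 1 prefers `u` to `v`, i.e. `val(u,g) ≥ val(v,g)` for
every payoff function `g ∈ 𝒢`) iff there exist garblings `q₁, q₂` with
`q₁.u = v.q₂`. -/
theorem comparison_iff_garblings (K : Type) [Fintype K]
    (hK : 2 ≤ Fintype.card K) (u v : InfoStruct K) :
    (∀ g : K → ℕ → ℕ → ℝ, IsPayoff g → val v g ≤ val u g) ↔
      ∃ q₁ q₂ : Garbling, garbleLeft q₁ u = garbleRight v q₂ :=
  comparison_iff_garblings_general u v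

end ValueDistance
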